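/- Let K be a field of characteristic 0 and let M be a Malcev dialgebra over K. Define the trilinear operation ⟨a,b,c⟩ = 2(ab)c + a(bc) + (ac)b on M. Then for all a,b,c,d,e ∈ M: ⟨a,b,⟨c,d,e⟩⟩ = ⟨⟨a,b,c⟩,d,e⟩ − ⟨⟨a,b,d⟩,c,e⟩ − ⟨⟨a,b,e⟩,c,d⟩ + ⟨⟨a,b,e⟩,d,c⟩. -/

import Mathlib

/-- The trilinear operation `⟨a,b,c⟩ = 2(ab)c + a(bc) + (ac)b` associated to a
bilinear product `f`. -/
def trip {K M : Type} [Field K] [AddCommGroup M] [Module K M]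
    (f : M →ₗ[K] M →ₗ[K] M) (a b c : M) : M :=
  (2 : K) • f (f a b) c + f a (f b c) + f (f a c) b

section MalcevDialgebra

variable {K M : Type*} [CommRing K] [AddCommGroup M] [Module K M] {f : M →ₗ[K] M →ₗ[K] M}

/-- Right anticommutativity as a rewriting rule. -/
theorem right_anticomm_swap (hra : ∀ a b c : M, f a (f b c) + f a (f c b) = 0) (x y z : M) :
    f x (f y z) = -f x (f z y) :=
  eq_neg_of_add_eq_zero_left (hra x y z)

/-- Right anticommutativity propagates to the left factor of a right factor. -/
theorem right_anticomm_swap_inner (hra : ∀ a b c : M, f a (f b c) + f a (f c b) = 0)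
    (x y z w : M) : f x (f (f y z) w) = -f x (f (f z y) w) := by
  rw [right_anticomm_swap hra x (f y z), right_anticomm_swap hra w y z, map_neg, neg_neg,
    right_anticomm_swap hra x w]

/-- The sum of three instances of the di-Malcev identity, simplified by right
anticommutativity. -/
theorem di_malcev_sum (hra : ∀ a b c : M, f a (f b c) + f a (f c b) = 0)
    (hdm : ∀ a b c d : M,
      f (f (f a b) c) d - f (f (f a d) b) c - f (f a (f c d)) b
        - f (f a c) (f b d) - f a (f (f b c) d) = 0) (a b c d : M) :
    f (f (f a b) c) d + f (f (f a c) b) d - f (f (f a d) b) c - f (f (f a b) d) c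
      - f (f a (f c d)) b - f (f a (f b d)) c - f (f a (f c b)) d
      - f (f a b) (f c d) - f a (f (f d c) b) = 0 := by
  have h₁ := hdm a b c d
  have h₂ := hdm a c b d
  have h₃ := hdm a d c b
  rw [right_anticomm_swap_inner hra a c b d] at h₂
  rw [right_anticomm_swap hra (f a c) d b] at h₃
  linear_combination (norm := module) h₁ + h₂ + h₃

end MalcevDialgebra

/-- In any Malcev dialgebra `M` over a field `K` of
characteristic 0, the trilinear operation `⟨a,b,c⟩ = 2(ab)c + a(bc) + (ac)b`
satisfies the second Leibniz triple system identity: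
`⟨a,b,⟨c,d,e⟩⟩ = ⟨⟨a,b,c⟩,d,e⟩ − ⟨⟨a,b,d⟩,c,e⟩ − ⟨⟨a,b,e⟩,c,d⟩ + ⟨⟨a,b,e⟩,d,c⟩`. -/
theorem trilinear_second_LTS_identity (K : Type) [Field K] [CharZero K]
    (M : Type) [AddCommGroup M] [Module K M]
    (f : M →ₗ[K] M →ₗ[K] M)
    (hra : ∀ a b c : M, f a (f b c) + f a (f c b) = 0)
    (hdm : ∀ a b c d : M,
      f (f (f a b) c) d - f (f (f a d) b) c - f (f a (f c d)) b
        - f (f a c) (f b d) - f a (f (f b c) d) = 0) :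
    ∀ a b c d e : M,
      trip f a b (trip f c d e)
        = trip f (trip f a b c) d e - trip f (trip f a b d) c e
          - trip f (trip f a b e) c d + trip f (trip f a b e) d c := by
  intro a b c d e
  have swap := right_anticomm_swap hra
  have swap_inner := right_anticomm_swap_inner hra
  have malcev_sum := di_malcev_sum hra hdm
  have h₁ := congrArg (f · e) (malcev_sum a b d c)
  have h₂ := malcev_sum a b d (f c e)
  have h₃ := malcev_sum a b e (f c d)
  have h₄ := congrArg (f · d) (malcev_sum a b e c)
  have h₅ := congrArg (f · c) (malcev_sum a b d e)
  have h₆ := malcev_sum a b (f d e) c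
  have h₇ := hdm (f a b) e d c
  have h₈ := hdm (f a b) d c e
  have h₉ := hdm (f a b) e c d
  have h₁₀ := hdm (f a b) d e c
  simp only [trip, map_add, map_sub, map_smul, map_neg, map_zero, LinearMap.add_apply,
    LinearMap.sub_apply, LinearMap.smul_apply, LinearMap.neg_apply, LinearMap.zero_apply,
    swap _ d b, swap _ e b, swap _ d c, swap _ e c, swap _ e d,
    swap_inner _ d c, swap_inner _ e c, swap_inner _ e d,
    fun x y => swap x y (f c d), fun x y => swap x y (f c e), fun x y => swap x y (f d e),
    swap_inner _ c (f d e), fun x y z w => swap x b (f (f y z) w)]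
    at h₁ h₂ h₃ h₄ h₅ h₆ h₇ h₈ h₉ h₁₀ ⊢
  linear_combination (norm := module) (2 : K) • h₁ + h₂ + (2 : K) • h₃ + h₄ + h₅ + h₆ + h₇
    + (2 : K) • h₈ + h₉ + (2 : K) • h₁₀
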